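/- arXiv:1301.5956 — 5 statements merged into one kernel-verified Lean document; each statement's English description precedes it below -/
import Mathlib

section
/- The position uncertainty of the semiclassical wave packet φ₀ satisfies Δx = √(ħ/2)·|A|; concretely, ∫_ℝ (x−a)² |φ₀(x)|² dx = (ħ/2)|A|². -/
open MeasureTheory Complex Real

/-!
The probability density `‖φ₀‖²` is exactly the density of the normal law with mean `a` and variance
`v = ħ‖A‖²/2`: the phase `iη(x-a)/ħ` has modulus one, and `2 Re (conj A * B) = 2` turns the
remaining exponent into `-(x-a)²/(ħ‖A‖²)`, while `‖c‖² = ‖A‖⁻¹` makes the prefactor the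
normalization constant `(√(2πv))⁻¹`. The integral is therefore the variance of that law.
-/

/-- The real part of `B / A` is `‖A‖⁻²`, so `B / (A ħ)` has the real part required of a Gaussian of
variance `ħ‖A‖²/2`. -/
lemma re_div_of_conj_mul {A B : ℂ}
    (hAB : (starRingEnd ℂ) A * B + (starRingEnd ℂ) B * A = 2) :
    (B / A).re = (‖A‖ ^ 2)⁻¹ := by
  have h := congrArg Complex.re hAB
  simp at h
  rw [Complex.div_re, Complex.sq_norm, ← add_div, inv_eq_one_div]
  congr 1
  linarith

lemma norm_sq_wavePacket {hbar a η : ℝ} (hhbar : 0 < hbar) {A B c : ℂ} (hA : A ≠ 0)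
    (hAB : (starRingEnd ℂ) A * B + (starRingEnd ℂ) B * A = 2)
    (hc : c ^ 2 = A⁻¹) {v : NNReal} (hv : (v : ℝ) = hbar / 2 * ‖A‖ ^ 2) (x : ℝ) :
    ‖((Real.pi ^ (-(1/4 : ℝ)) : ℝ) * (hbar ^ (-(1/4 : ℝ)) : ℝ) * c *
        Complex.exp (-B * ((x : ℂ) - a) ^ 2 / (2 * A * hbar) +
          Complex.I * η * ((x : ℂ) - a) / hbar) : ℂ)‖ ^ 2 =
      ProbabilityTheory.gaussianPDFReal a v x := by
  have hA' : 0 < ‖A‖ := norm_pos_iff.mpr hA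
  have hcn : ‖c‖ ^ 2 = ‖A‖⁻¹ := by rw [← norm_pow, hc, norm_inv]
  have hpow : ∀ t : ℝ, 0 < t → (t ^ (-(1/4 : ℝ))) ^ 2 = (√t)⁻¹ := by
    intro t ht
    rw [← Real.rpow_natCast, ← Real.rpow_mul ht.le, Real.sqrt_eq_rpow, ← Real.rpow_neg ht.le]
    norm_num
  have hre : (-B * ((x : ℂ) - a) ^ 2 / (2 * A * hbar) +
      Complex.I * η * ((x : ℂ) - a) / hbar).re = -((x - a) ^ 2 / (2 * hbar)) * (‖A‖ ^ 2)⁻¹ := by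
    have hh : (hbar : ℂ) ≠ 0 := by exact_mod_cast hhbar.ne'
    have : (-B * ((x : ℂ) - a) ^ 2 / (2 * A * hbar) + Complex.I * η * ((x : ℂ) - a) / hbar) =
        ((-((x - a) ^ 2 / (2 * hbar)) : ℝ) : ℂ) * (B / A) +
          ((η * (x - a) / hbar : ℝ) : ℂ) * Complex.I := by
      push_cast
      field_simp
    rw [this, Complex.add_re, Complex.re_ofReal_mul, Complex.re_ofReal_mul, Complex.I_re,
      re_div_of_conj_mul hAB]
    ring
  have hsqrt : √(2 * π * v) = √π * √hbar * ‖A‖ := by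
    rw [hv, show 2 * π * (hbar / 2 * ‖A‖ ^ 2) = π * hbar * ‖A‖ ^ 2 by ring,
      Real.sqrt_mul (by positivity), Real.sqrt_mul (by positivity), Real.sqrt_sq hA'.le]
  rw [ProbabilityTheory.gaussianPDFReal, hsqrt, norm_mul, norm_mul, norm_mul, Complex.norm_exp,
    hre, Complex.norm_real, Complex.norm_real, mul_pow, mul_pow, mul_pow, Real.norm_eq_abs,
    Real.norm_eq_abs, sq_abs, sq_abs, hpow π Real.pi_pos, hpow hbar hhbar, hcn,
    ← Real.exp_nat_mul, mul_inv, mul_inv, hv]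
  congr 2
  push_cast
  field_simp

/-- The position uncertainty of the semiclassical wave packet `φ₀` satisfies
`Δx = √(ħ/2)·|A|`; concretely, `∫ (x−a)² |φ₀(x)|² dx = (ħ/2)|A|²`. -/
theorem stmt_1 (hbar a η : ℝ) (hhbar : 0 < hbar) (A B c : ℂ)
    (hAB : (starRingEnd ℂ) A * B + (starRingEnd ℂ) B * A = 2)
    (hc : c ^ 2 = A⁻¹) (φ : ℝ → ℂ)
    (hφ : ∀ x : ℝ, φ x =
      (Real.pi ^ (-(1/4 : ℝ)) : ℝ) * (hbar ^ (-(1/4 : ℝ)) : ℝ) * c *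
        Complex.exp (-B * ((x : ℂ) - a) ^ 2 / (2 * A * hbar) +
          Complex.I * η * ((x : ℂ) - a) / hbar)) :
    ∫ x : ℝ, (x - a) ^ 2 * ‖φ x‖ ^ 2 = hbar / 2 * ‖A‖ ^ 2 := by
  have hA : A ≠ 0 := by
    rintro rfl
    simp at hAB
  have hpos : 0 < hbar / 2 * ‖A‖ ^ 2 := by
    have := norm_pos_iff.mpr hA
    positivity
  obtain ⟨v, hv⟩ : ∃ v : NNReal, (v : ℝ) = hbar / 2 * ‖A‖ ^ 2 := ⟨⟨_, hpos.le⟩, rfl⟩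
  have hv0 : v ≠ 0 := by
    rintro rfl
    exact hpos.ne hv
  have hvar := ProbabilityTheory.variance_fun_id_gaussianReal (μ := a) (v := v)
  rw [ProbabilityTheory.variance_eq_integral (by fun_prop),
    ProbabilityTheory.integral_id_gaussianReal,
    ProbabilityTheory.integral_gaussianReal_eq_integral_smul hv0] at hvar
  rw [← hv, ← hvar]
  congr 1 with x
  rw [hφ, norm_sq_wavePacket hhbar hA hAB hc hv, smul_eq_mul, mul_comm]
end

section
/- The momentum uncertainty of the semiclassical wave packet φ₀ satisfies Δp = √(ħ/2)·|B|; concretely, ∫_ℝ |−iħφ₀′(x) − ηφ₀(x)|² dx = (ħ/2)|B|², where φ₀′ denotes the derivative of φ₀. -/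
/-!
Differentiating the Gaussian exponent gives `(p - η) φ₀ = (i B / A) (x - a) φ₀`. Since
`Re (B / A) = 1 / |A|²`, the density is
`|φ₀|² = (π ħ)^(-1/2) |A|⁻¹ exp (-(x - a)² / (|A|² ħ))`, so the claim reduces to the second moment
of a real Gaussian (`integral_sq_mul_exp_neg_mul_sq`), obtained by integration by parts.
-/

open MeasureTheory Complex Real

theorem integral_sq_mul_exp_neg_mul_sq {b : ℝ} (hb : 0 < b) :
    ∫ x : ℝ, x ^ 2 * Real.exp (-b * x ^ 2) = √(Real.pi / b) / (2 * b) := by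
  have hv : ∀ x : ℝ, HasDerivAt (fun x : ℝ => Real.exp (-b * x ^ 2))
      (Real.exp (-b * x ^ 2) * (-b * (2 * x))) x := by
    intro x
    simpa using (((hasDerivAt_id x).pow 2).const_mul (-b)).exp
  have h2 : Integrable (fun x : ℝ => x ^ 2 * Real.exp (-b * x ^ 2)) := by
    simpa using integrable_rpow_mul_exp_neg_mul_sq hb (by norm_num : (-1 : ℝ) < 2)
  have key := integral_mul_deriv_eq_deriv_mul_of_integrable
    (u := fun x : ℝ => x) (u' := fun _ => 1) (v := fun x : ℝ => Real.exp (-b * x ^ 2))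
    (v' := fun x => Real.exp (-b * x ^ 2) * (-b * (2 * x)))
    (fun x _ => hasDerivAt_id x) (fun x _ => hv x)
    ((h2.const_mul (-2 * b)).congr (ae_of_all _ fun x => by simp only [Pi.mul_apply]; ring))
    (by simpa [Pi.mul_def] using integrable_exp_neg_mul_sq hb)
    (integrable_mul_exp_neg_mul_sq hb)
  have e : ∀ x : ℝ, x * (Real.exp (-b * x ^ 2) * (-b * (2 * x)))
      = (-2 * b) * (x ^ 2 * Real.exp (-b * x ^ 2)) := fun x => by ring
  simp only [e, one_mul, integral_const_mul, integral_gaussian] at key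
  rw [eq_div_iff (by positivity)]
  linarith

/-- The momentum uncertainty of the semiclassical wave packet `φ₀` satisfies
`Δp = √(ħ/2)·|B|`; concretely, `∫ |−iħφ₀′(x) − ηφ₀(x)|² dx = (ħ/2)|B|²`. -/
theorem stmt_2 (hbar a η : ℝ) (hhbar : 0 < hbar) (A B c : ℂ)
    (hAB : (starRingEnd ℂ) A * B + (starRingEnd ℂ) B * A = 2)
    (hc : c ^ 2 = A⁻¹) (φ : ℝ → ℂ)
    (hφ : ∀ x : ℝ, φ x =
      (Real.pi ^ (-(1/4 : ℝ)) : ℝ) * (hbar ^ (-(1/4 : ℝ)) : ℝ) * c *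
        Complex.exp (-B * ((x : ℂ) - a) ^ 2 / (2 * A * hbar) +
          Complex.I * η * ((x : ℂ) - a) / hbar)) :
    ∫ x : ℝ, ‖-Complex.I * hbar * deriv φ x - η * φ x‖ ^ 2 =
      hbar / 2 * ‖B‖ ^ 2 := by
  have hA : A ≠ 0 := by
    rintro rfl
    simp at hAB
  have hh : (hbar : ℂ) ≠ 0 := by exact_mod_cast hhbar.ne'
  have hAn : 0 < ‖A‖ := norm_pos_iff.mpr hA
  have hre : (B / A).re = 1 / ‖A‖ ^ 2 := by
    have h := congrArg Complex.re hAB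
    simp only [Complex.add_re, Complex.mul_re, Complex.conj_re, Complex.conj_im,
      Complex.re_ofNat] at h
    rw [Complex.div_re, ← Complex.normSq_eq_norm_sq, ← add_div]
    congr 1
    linarith
  have hcn : ‖c‖ ^ 2 = ‖A‖⁻¹ := by rw [← norm_pow, hc, norm_inv]
  have hderiv : ∀ x : ℝ, deriv φ x =
      φ x * (-B * ((x : ℂ) - a) / (A * hbar) + Complex.I * η / hbar) := by
    intro x
    have h1 : HasDerivAt (fun x : ℝ => (x : ℂ) - a) 1 x :=
      (Complex.ofRealCLM.hasDerivAt (x := x)).sub_const _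
    have h2 := ((((h1.pow 2).const_mul (-B)).div_const (2 * A * hbar)).add
      ((h1.const_mul (Complex.I * η)).div_const (hbar : ℂ))).cexp.const_mul
      (((Real.pi ^ (-(1/4 : ℝ)) : ℝ) : ℂ) * (hbar ^ (-(1/4 : ℝ)) : ℝ) * c)
    have h3 : HasDerivAt φ _ x := h2.congr_of_eventuallyEq (Filter.Eventually.of_forall hφ)
    rw [h3.deriv, hφ x]
    simp only [Pi.add_apply, Pi.pow_apply]
    field_simp
    push_cast
    ring
  have hp : ∀ r : ℝ, 0 < r → (r ^ (-(1/4 : ℝ))) ^ 2 = (√r)⁻¹ := by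
    intro r hr
    rw [← Real.rpow_natCast, ← Real.rpow_mul hr.le, Real.sqrt_eq_rpow, ← Real.rpow_neg hr.le]
    norm_num
  set b : ℝ := 1 / (‖A‖ ^ 2 * hbar) with hb
  have hbpos : 0 < b := by positivity
  have hint : ∀ x : ℝ, ‖-Complex.I * hbar * deriv φ x - η * φ x‖ ^ 2 =
      ((√Real.pi)⁻¹ * (√hbar)⁻¹ * ‖A‖⁻¹ * (‖B‖ / ‖A‖) ^ 2) *
        ((x - a) ^ 2 * Real.exp (-b * (x - a) ^ 2)) := by
    intro x
    have e1 : -Complex.I * hbar * deriv φ x - η * φ x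
        = Complex.I * (B / A) * ((x - a : ℝ) : ℂ) * φ x := by
      rw [hderiv]
      push_cast
      field_simp
      linear_combination (-(η : ℂ) * A * φ x) * Complex.I_sq
    have e2 : (-B * ((x : ℂ) - a) ^ 2 / (2 * A * hbar) +
        Complex.I * η * ((x : ℂ) - a) / hbar).re = -b * (x - a) ^ 2 / 2 := by
      have : -B * ((x : ℂ) - a) ^ 2 / (2 * A * hbar) + Complex.I * η * ((x : ℂ) - a) / hbar
          = ((-((x - a) ^ 2 / (2 * hbar)) : ℝ) : ℂ) * (B / A)
            + ((η * (x - a) / hbar : ℝ) : ℂ) * Complex.I := by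
        push_cast
        field_simp
      rw [this, Complex.add_re, Complex.re_ofReal_mul, Complex.re_ofReal_mul, hre, Complex.I_re, hb]
      field_simp
      ring
    have e3 : Real.exp (-b * (x - a) ^ 2 / 2) ^ 2 = Real.exp (-b * (x - a) ^ 2) := by
      rw [← Real.exp_nat_mul]
      congr 1
      push_cast
      ring
    rw [e1, hφ x]
    simp only [norm_mul, mul_pow, Complex.norm_exp, e2, e3, hcn, Complex.norm_real,
      Real.norm_eq_abs, sq_abs, hp _ hhbar, hp _ Real.pi_pos, Complex.norm_I, norm_div]
    ring
  simp only [hint]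
  rw [integral_const_mul,
    integral_sub_right_eq_self (fun x : ℝ => x ^ 2 * Real.exp (-b * x ^ 2)) a,
    integral_sq_mul_exp_neg_mul_sq hbpos]
  have hs : √(Real.pi / b) = √Real.pi * √hbar * ‖A‖ := by
    rw [hb, div_div_eq_mul_div, div_one, Real.sqrt_mul Real.pi_pos.le,
      Real.sqrt_mul (by positivity), Real.sqrt_sq hAn.le]
    ring
  have : 0 < √Real.pi := Real.sqrt_pos.mpr Real.pi_pos
  have : 0 < √hbar := Real.sqrt_pos.mpr hhbar
  rw [hs, hb]
  field_simp
end

section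
/- The lowering operator annihilates φ₀: for every x ∈ ℝ, B·(x−a)·φ₀(x) + iA·(−iħφ₀′(x) − ηφ₀(x)) = 0. -/
/-!
The packet is a constant times the exponential of a quadratic, so its derivative is the packet
times the derivative of the exponent, `-B (x - a) / (A ħ) + i η / ħ`. The lowering operator is
this first-order equation multiplied by `A ħ`; the normalization `Re (conj A * B) = 1` enters only
to give `A ≠ 0`.
-/

open MeasureTheory Complex Real

/-- The lowering operator annihilates `φ₀`: for every `x ∈ ℝ`,
`B·(x−a)·φ₀(x) + iA·(−iħφ₀′(x) − ηφ₀(x)) = 0`. -/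
theorem stmt_4 (hbar a η : ℝ) (hhbar : 0 < hbar) (A B c : ℂ)
    (hAB : (starRingEnd ℂ) A * B + (starRingEnd ℂ) B * A = 2)
    (hc : c ^ 2 = A⁻¹) (φ : ℝ → ℂ)
    (hφ : ∀ x : ℝ, φ x =
      (Real.pi ^ (-(1/4 : ℝ)) : ℝ) * (hbar ^ (-(1/4 : ℝ)) : ℝ) * c *
        Complex.exp (-B * ((x : ℂ) - a) ^ 2 / (2 * A * hbar) +
          Complex.I * η * ((x : ℂ) - a) / hbar)) :
    ∀ x : ℝ, B * ((x : ℂ) - a) * φ x +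
      Complex.I * A * (-Complex.I * hbar * deriv φ x - η * φ x) = 0 := by
  intro x
  have hA : A ≠ 0 := by
    rintro rfl
    simp at hAB
  have hh : (hbar : ℂ) ≠ 0 := Complex.ofReal_ne_zero.mpr (ne_of_gt hhbar)
  have hderiv : HasDerivAt φ
      ((-B * ((x : ℂ) - a) / (A * hbar) + Complex.I * η / hbar) * φ x) x := by
    have h1 : HasDerivAt (fun y : ℝ => (y : ℂ) - a) 1 x :=
      (HasDerivAt.ofReal_comp (hasDerivAt_id x)).sub_const (a : ℂ) |>.congr_deriv (by simp)
    have h2 := ((((h1.pow 2).const_mul (-B)).div_const (2 * A * hbar)).add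
      ((h1.const_mul (Complex.I * η)).div_const (hbar : ℂ))).cexp.const_mul
        (((Real.pi ^ (-(1/4 : ℝ)) : ℝ) : ℂ) * (hbar ^ (-(1/4 : ℝ)) : ℝ) * c)
    rw [show φ = _ from funext hφ]
    refine h2.congr_deriv ?_
    simp only [Pi.add_apply, Pi.pow_apply]
    field_simp
    ring
  rw [hderiv.deriv]
  field_simp
  linear_combination (-(φ x) * (-B * ((x : ℂ) - a) + A * Complex.I * η)) * Complex.I_sq
end

section
/- Main theorem: assume |A| ≠ |B| and let θ = ½·arctan(2·Im(B\bar{A})/(|B|² − |A|²)). Then the state φ₀ minimizes the uncertainty product for the rotated observables α and β: with ⟨α⟩ = a cos θ + η sin θ and ⟨β⟩ = −a sin θ + η cos θ, one has (∫_ℝ |cos θ · x·φ₀(x) − iħ sin θ · φ₀′(x) − ⟨α⟩φ₀(x)|² dx) · (∫_ℝ |−sin θ · x·φ₀(x) − iħ cos θ · φ₀′(x) − ⟨β⟩φ₀(x)|² dx) = ħ²/4, i.e. Δα·Δβ = ħ/2. -/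
open MeasureTheory Complex Real

/-!
Since `-iħφ' = (i(B/A)(x - a) + η)φ`, every observable `u·x + v·p`, centred at `a u + η v`, acts on
the packet as multiplication by `(u + i(B/A)v)(x - a)`. The normalisation `Re(conj A · B) = 1` makes
`|φ|²` the density of a Gaussian of mean `a` and variance `ħ|A|²/2`, so the variance of the
observable is `(ħ/2)|A u + iB v|²` (`integral_packet`).

With `P = |A|²`, `Q = |B|²` and `m = Im(B conj A)`, this is `ħ/2` times a quadratic form in `(u, v)`
with diagonal entries `P, Q`, off-diagonal entry `-m` and determinant `PQ - m² = 1`. The angle `θ`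
diagonalises the form, so the product of the variances along the two rotated axes is `ħ²/4` times
its determinant (`rotation_identity`).
-/

lemma integral_sq_mul_gaussian (b : ℝ) (hb : 0 < b) :
    ∫ x : ℝ, x ^ 2 * Real.exp (-b * x ^ 2) = √(π / b) / (2 * b) := by
  have h1 : ∫ x : ℝ, x ^ 2 * Real.exp (-b * x ^ 2)
      = 2 * ∫ x in Set.Ioi (0 : ℝ), x ^ (2 : ℝ) * Real.exp (-b * x ^ (2 : ℝ)) := by
    have := integral_comp_abs (f := fun x : ℝ => x ^ (2 : ℝ) * Real.exp (-b * x ^ (2 : ℝ)))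
    rw [← this]
    refine integral_congr_ae (.of_forall fun x => ?_)
    simp [sq_abs]
  rw [h1, _root_.integral_rpow_mul_exp_neg_mul_rpow two_pos (by norm_num) hb]
  have h2 : Real.Gamma ((2 + 1) / 2) = √π / 2 := by
    rw [show ((2 : ℝ) + 1) / 2 = 1 / 2 + 1 by norm_num, Real.Gamma_add_one (by norm_num),
      Real.Gamma_one_half_eq]
    ring
  have h3 : b ^ (-((2 : ℝ) + 1) / 2) = (√b)⁻¹ * b⁻¹ := by
    rw [show -((2 : ℝ) + 1) / 2 = -(1 / 2) + -1 by norm_num, Real.rpow_add hb,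
      Real.rpow_neg hb.le, Real.rpow_neg_one, ← Real.sqrt_eq_rpow]
  rw [h2, h3, Real.sqrt_div Real.pi_pos.le]
  field_simp

/-- The symmetric matrix with diagonal `P, Q` and off-diagonal entry `-m` is diagonalised by the
rotation through `θ`, so its two rotated diagonal entries multiply to its determinant, here `1`. -/
lemma rotation_identity (P Q m : ℝ) (hPQ : P * Q = 1 + m ^ 2) (hne : P ≠ Q) (θ : ℝ)
    (hθ : θ = 1 / 2 * Real.arctan (2 * m / (Q - P))) :
    (P * Real.cos θ ^ 2 + Q * Real.sin θ ^ 2 - 2 * m * Real.sin θ * Real.cos θ) *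
      (P * Real.sin θ ^ 2 + Q * Real.cos θ ^ 2 + 2 * m * Real.sin θ * Real.cos θ) = 1 := by
  have hd : Q - P ≠ 0 := sub_ne_zero.2 hne.symm
  have h2 : 2 * θ = Real.arctan (2 * m / (Q - P)) := by rw [hθ]; ring
  have hcos : Real.cos (2 * θ) ≠ 0 := by rw [h2]; exact (Real.cos_arctan_pos _).ne'
  have htan : Real.tan (2 * θ) = 2 * m / (Q - P) := by rw [h2, Real.tan_arctan]
  have hm : (Q - P) * Real.sin (2 * θ) = 2 * m * Real.cos (2 * θ) := by
    rw [Real.tan_eq_sin_div_cos] at htan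
    field_simp at htan
    linarith
  rw [Real.sin_two_mul, Real.cos_two_mul'] at hm
  have hs := Real.sin_sq_add_cos_sq θ
  generalize Real.sin θ = s at *
  generalize Real.cos θ = k at *
  -- The product of the diagonal entries is the determinant plus the squared off-diagonal entry
  -- of the rotated matrix; the choice of `θ` makes the latter vanish.
  have key : (P * k ^ 2 + Q * s ^ 2 - 2 * m * s * k) * (P * s ^ 2 + Q * k ^ 2 + 2 * m * s * k)
      = (P * Q - m ^ 2) * (s ^ 2 + k ^ 2) ^ 2
        + (((Q - P) * (2 * s * k) - 2 * m * (k ^ 2 - s ^ 2)) / 2) ^ 2 := by ring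
  rw [key, hm, hs, hPQ]; ring

/-- Each rotated observable acts on the packet as multiplication by `w · (x - a)`;
this is the resulting variance, namely `|w|²` times the variance `ħ|A|²/2` of `|φ|²`. -/
lemma integral_packet (hbar a η : ℝ) (hhbar : 0 < hbar) (A B c w : ℂ) (hA : A ≠ 0)
    (hre : (B / A).re = 1 / ‖A‖ ^ 2) (hc : c ^ 2 = A⁻¹) :
    ∫ x : ℝ, ‖w * ((x : ℂ) - a) * ((Real.pi ^ (-(1/4 : ℝ)) : ℝ) * (hbar ^ (-(1/4 : ℝ)) : ℝ) * c *
        Complex.exp (-B * ((x : ℂ) - a) ^ 2 / (2 * A * hbar) +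
          Complex.I * η * ((x : ℂ) - a) / hbar))‖ ^ 2 = hbar / 2 * ‖A * w‖ ^ 2 := by
  have hn : 0 < ‖A‖ := norm_pos_iff.2 hA
  have hcn : ‖c‖ ^ 2 = ‖A‖⁻¹ := by rw [← norm_pow, hc, norm_inv]
  have hrpow (t : ℝ) (ht : 0 < t) : (t ^ (-(1/4 : ℝ))) ^ 2 = (√t)⁻¹ := by
    rw [← Real.rpow_natCast, ← Real.rpow_mul ht.le, Real.sqrt_eq_rpow, ← Real.rpow_neg ht.le]
    norm_num
  set b : ℝ := 1 / (hbar * ‖A‖ ^ 2) with hb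
  have hbpos : 0 < b := by positivity
  have hexp (y : ℝ) : ‖Complex.exp (-B * (y : ℂ) ^ 2 / (2 * A * hbar) +
      Complex.I * η * (y : ℂ) / hbar)‖ ^ 2 = Real.exp (-b * y ^ 2) := by
    have e : -B * (y : ℂ) ^ 2 / (2 * A * hbar) + Complex.I * η * (y : ℂ) / hbar
        = ((-(y ^ 2 / (2 * hbar)) : ℝ) : ℂ) * (B / A) + ((η * y / hbar : ℝ) : ℂ) * Complex.I := by
      push_cast
      have : (hbar : ℂ) ≠ 0 := by exact_mod_cast hhbar.ne'
      field_simp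
    rw [e, Complex.norm_exp, ← Real.exp_nat_mul, Complex.add_re, Complex.re_ofReal_mul, hre,
      Complex.re_ofReal_mul, Complex.I_re, hb]
    congr 1
    push_cast
    field_simp
    ring
  have hint (x : ℝ) : ‖w * ((x : ℂ) - a) * ((Real.pi ^ (-(1/4 : ℝ)) : ℝ) *
      (hbar ^ (-(1/4 : ℝ)) : ℝ) * c *
        Complex.exp (-B * ((x : ℂ) - a) ^ 2 / (2 * A * hbar) +
          Complex.I * η * ((x : ℂ) - a) / hbar))‖ ^ 2
      = ‖w‖ ^ 2 * ((√π)⁻¹ * (√hbar)⁻¹ * ‖A‖⁻¹) *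
        ((fun y : ℝ => y ^ 2 * Real.exp (-b * y ^ 2)) (x - a)) := by
    have := hexp (x - a)
    push_cast at this
    have hxa : ‖(x : ℂ) - a‖ ^ 2 = (x - a) ^ 2 := by
      rw [← Complex.ofReal_sub, Complex.norm_real, Real.norm_eq_abs, sq_abs]
    simp only [norm_mul, mul_pow, this, hxa, hcn, Complex.norm_real, Real.norm_eq_abs, sq_abs,
      hrpow _ Real.pi_pos, hrpow _ hhbar]
    ring
  simp_rw [hint]
  rw [integral_const_mul, integral_sub_right_eq_self (fun y : ℝ => y ^ 2 * Real.exp (-b * y ^ 2)),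
    integral_sq_mul_gaussian b hbpos, hb]
  have hs : √(π / (1 / (hbar * ‖A‖ ^ 2))) = √π * √hbar * ‖A‖ := by
    rw [show π / (1 / (hbar * ‖A‖ ^ 2)) = π * hbar * ‖A‖ ^ 2 by field_simp,
      Real.sqrt_mul (by positivity), Real.sqrt_mul Real.pi_pos.le, Real.sqrt_sq hn.le]
  rw [hs, norm_mul]
  field_simp

/-- Main theorem: with `θ = ½·arctan(2·Im(B conj A)/(|B|² − |A|²))`, the
semiclassical wave packet `φ₀` minimizes the uncertainty product for the
rotated observables `α = cos θ · x + sin θ · p` and `β = −sin θ · x + cos θ · p`: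
`(Δα)²·(Δβ)² = ħ²/4`, i.e. `Δα·Δβ = ħ/2`. -/
theorem stmt_10 (hbar a η : ℝ) (hhbar : 0 < hbar) (A B c : ℂ)
    (hAB : (starRingEnd ℂ) A * B + (starRingEnd ℂ) B * A = 2)
    (hc : c ^ 2 = A⁻¹) (hABne : ‖A‖ ≠ ‖B‖) (φ : ℝ → ℂ)
    (hφ : ∀ x : ℝ, φ x =
      (Real.pi ^ (-(1/4 : ℝ)) : ℝ) * (hbar ^ (-(1/4 : ℝ)) : ℝ) * c *
        Complex.exp (-B * ((x : ℂ) - a) ^ 2 / (2 * A * hbar) +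
          Complex.I * η * ((x : ℂ) - a) / hbar)) :
    let θ : ℝ := 1 / 2 *
      Real.arctan (2 * (B * (starRingEnd ℂ) A).im / (‖B‖ ^ 2 - ‖A‖ ^ 2))
    let Eα : ℝ := a * Real.cos θ + η * Real.sin θ
    let Eβ : ℝ := -a * Real.sin θ + η * Real.cos θ
    (∫ x : ℝ, ‖(Real.cos θ : ℂ) * x * φ x - Complex.I * hbar * Real.sin θ * deriv φ x
        - Eα * φ x‖ ^ 2) *
      (∫ x : ℝ, ‖-(Real.sin θ : ℂ) * x * φ x - Complex.I * hbar * Real.cos θ * deriv φ x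
        - Eβ * φ x‖ ^ 2) = hbar ^ 2 / 4 := by
  intro θ Eα Eβ
  have hA : A ≠ 0 := by rintro rfl; simp at hAB
  have hh : (hbar : ℂ) ≠ 0 := by exact_mod_cast hhbar.ne'
  have hr : A.re * B.re + A.im * B.im = 1 := by
    have := congrArg Complex.re hAB
    simp at this
    linarith
  have hnA : ‖A‖ ^ 2 = A.re ^ 2 + A.im ^ 2 := by
    rw [← Complex.normSq_eq_norm_sq, Complex.normSq_apply]; ring
  have hnB : ‖B‖ ^ 2 = B.re ^ 2 + B.im ^ 2 := by
    rw [← Complex.normSq_eq_norm_sq, Complex.normSq_apply]; ring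
  have hm : (B * (starRingEnd ℂ) A).im = B.im * A.re - B.re * A.im := by
    simp; ring
  have hre : (B / A).re = 1 / ‖A‖ ^ 2 := by
    rw [Complex.div_re, Complex.normSq_eq_norm_sq, ← add_div, ← hr]
    ring
  have hderiv (x : ℝ) : deriv φ x
      = (-B * ((x : ℂ) - a) / (A * hbar) + Complex.I * η / hbar) * φ x := by
    have hx : HasDerivAt (fun x : ℝ => (x : ℂ) - a) 1 x :=
      (Complex.ofRealCLM.hasDerivAt (x := x)).sub_const _
    have h1 := (((hx.pow 2).const_mul (-B)).div_const (2 * A * hbar)).add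
      ((hx.const_mul (Complex.I * η)).div_const (hbar : ℂ))
    have h2 := h1.cexp.const_mul
      ((Real.pi ^ (-(1/4 : ℝ)) : ℝ) * (hbar ^ (-(1/4 : ℝ)) : ℝ) * c : ℂ)
    have h3 := h2.congr_of_eventuallyEq (f₁ := φ) (.of_forall hφ)
    rw [h3.deriv, hφ]
    simp only [Pi.add_apply, Pi.pow_apply]
    field_simp
    ring
  have key (u v : ℝ) : ∫ x : ℝ, ‖(u : ℂ) * x * φ x - Complex.I * hbar * v * deriv φ x
        - ((a * u + η * v : ℝ) : ℂ) * φ x‖ ^ 2 = hbar / 2 * ‖A * u + Complex.I * B * v‖ ^ 2 := by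
    have := integral_packet hbar a η hhbar A B c (u + Complex.I * B * v / A) hA hre hc
    rw [show A * (u + Complex.I * B * v / A) = A * u + Complex.I * B * v by field_simp] at this
    rw [← this]
    refine integral_congr_ae (.of_forall fun x => ?_)
    simp only [← hφ, hderiv]
    congr 2
    push_cast
    field_simp
    linear_combination (-(η * v * A * φ x)) * Complex.I_sq
  have hnorm (u v : ℝ) : ‖A * u + Complex.I * B * v‖ ^ 2
      = ‖A‖ ^ 2 * u ^ 2 + ‖B‖ ^ 2 * v ^ 2 - 2 * (B * (starRingEnd ℂ) A).im * u * v := by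
    rw [← Complex.normSq_eq_norm_sq, Complex.normSq_apply, hnA, hnB, hm]
    simp
    ring
  have hrot := rotation_identity (‖A‖ ^ 2) (‖B‖ ^ 2) (B * (starRingEnd ℂ) A).im
    (by rw [hnA, hnB, hm]; linear_combination (A.re * B.re + A.im * B.im + 1) * hr)
    (fun h => hABne ((sq_eq_sq₀ (norm_nonneg _) (norm_nonneg _)).1 h)) θ rfl
  have hα := key (Real.cos θ) (Real.sin θ)
  have hβ := key (-Real.sin θ) (Real.cos θ)
  rw [hnorm] at hα hβ
  rw [show a * -Real.sin θ + η * Real.cos θ = Eβ by simp only [Eβ]; ring] at hβ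
  rw [Complex.ofReal_neg] at hβ
  rw [hα, hβ]
  linear_combination hbar ^ 2 / 4 * hrot
end

section
/- Let A₀, B₀ ∈ ℂ satisfy Re(\overline{A₀}·B₀) = 1 and |A₀| ≠ |B₀|, and set θ = ½·arctan(2·Im(B₀\overline{A₀})/(|B₀|² − |A₀|²)). Define A(θ) = A₀·cos θ + i·B₀·sin θ and B(θ) = i·A₀·sin θ + B₀·cos θ. Then Im(B(θ)·\overline{A(θ)}) = 0 and |A(θ)|·|B(θ)| = 1. -/
open Complex Real

/-!
Write `M = Im (B₀ * conj A₀)` and `D = |B₀|² - |A₀|²`. Expanding the product gives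
`B(t) * conj (A(t)) = Re (conj A₀ * B₀) + i (M cos 2t - (D / 2) sin 2t)`,
so the real part is conserved and equals `1`. The imaginary part vanishes exactly when
`D sin 2t = 2 M cos 2t`, which holds at `t = θ` because `tan 2θ = 2 M / D`. Hence
`B(θ) * conj (A(θ)) = 1`, and taking norms gives `|A(θ)| |B(θ)| = 1`.
-/

theorem rotated_re (A B : ℂ) (t : ℝ) :
    ((I * A * Real.sin t + B * Real.cos t) *
      (starRingEnd ℂ) (A * Real.cos t + I * B * Real.sin t)).re
      = ((starRingEnd ℂ) A * B).re := by
  have h := Real.sin_sq_add_cos_sq t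
  simp only [map_add, map_mul, conj_I, conj_ofReal, add_re, add_im, mul_re, mul_im, neg_re,
    neg_im, I_re, I_im, ofReal_re, ofReal_im, conj_re, conj_im]
  linear_combination (A.re * B.re + A.im * B.im) * h

theorem rotated_im (A B : ℂ) (t : ℝ) :
    ((I * A * Real.sin t + B * Real.cos t) *
      (starRingEnd ℂ) (A * Real.cos t + I * B * Real.sin t)).im
      = (B * (starRingEnd ℂ) A).im * Real.cos (2 * t)
        - (‖B‖ ^ 2 - ‖A‖ ^ 2) / 2 * Real.sin (2 * t) := by
  rw [Real.cos_two_mul', Real.sin_two_mul, Complex.sq_norm, Complex.sq_norm, normSq_apply,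
    normSq_apply]
  simp only [map_add, map_mul, conj_I, conj_ofReal, add_re, add_im, mul_re, mul_im, neg_re,
    neg_im, I_re, I_im, ofReal_re, ofReal_im, conj_re, conj_im]
  ring

/-- For `A₀, B₀ ∈ ℂ` with `Re(conj(A₀)·B₀) = 1` and `|A₀| ≠ |B₀|`, with
`θ = ½·arctan(2·Im(B₀ conj A₀)/(|B₀|² − |A₀|²))`, the rotated parameters
`A(θ) = A₀·cos θ + i·B₀·sin θ` and `B(θ) = i·A₀·sin θ + B₀·cos θ` satisfy
`Im(B(θ)·conj(A(θ))) = 0` and `|A(θ)|·|B(θ)| = 1`. -/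
theorem stmt_19 (A₀ B₀ : ℂ)
    (hnorm : ((starRingEnd ℂ) A₀ * B₀).re = 1) (hne : ‖A₀‖ ≠ ‖B₀‖) :
    let θ : ℝ := 1 / 2 *
      Real.arctan (2 * (B₀ * (starRingEnd ℂ) A₀).im / (‖B₀‖ ^ 2 - ‖A₀‖ ^ 2))
    let Aθ : ℂ := A₀ * Real.cos θ + Complex.I * B₀ * Real.sin θ
    let Bθ : ℂ := Complex.I * A₀ * Real.sin θ + B₀ * Real.cos θ
    (Bθ * (starRingEnd ℂ) Aθ).im = 0 ∧ ‖Aθ‖ * ‖Bθ‖ = 1 := by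
  intro θ Aθ Bθ
  have hD : ‖B₀‖ ^ 2 - ‖A₀‖ ^ 2 ≠ 0 := fun h =>
    hne ((sq_eq_sq₀ (norm_nonneg _) (norm_nonneg _)).1 (sub_eq_zero.1 h).symm)
  have h2θ : 2 * θ =
      Real.arctan (2 * (B₀ * (starRingEnd ℂ) A₀).im / (‖B₀‖ ^ 2 - ‖A₀‖ ^ 2)) := by
    simp only [θ]
    ring
  -- `arctan` takes values where `cos` is positive, so `tan 2θ` is a genuine quotient.
  have hcos : Real.cos (2 * θ) ≠ 0 := by
    rw [h2θ]
    exact (Real.cos_arctan_pos _).ne'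
  have htan : Real.sin (2 * θ) / Real.cos (2 * θ) =
      2 * (B₀ * (starRingEnd ℂ) A₀).im / (‖B₀‖ ^ 2 - ‖A₀‖ ^ 2) := by
    rw [← Real.tan_eq_sin_div_cos, h2θ, Real.tan_arctan]
  rw [div_eq_div_iff hcos hD] at htan
  have him : (Bθ * (starRingEnd ℂ) Aθ).im = 0 := by
    rw [rotated_im A₀ B₀ θ]
    linear_combination -htan / 2
  have hre : (Bθ * (starRingEnd ℂ) Aθ).re = 1 := (rotated_re A₀ B₀ θ).trans hnorm
  have hone : Bθ * (starRingEnd ℂ) Aθ = 1 := Complex.ext hre him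
  refine ⟨him, ?_⟩
  have h := congrArg norm hone
  rwa [norm_mul, RCLike.norm_conj, norm_one, mul_comm] at h
end
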